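/- Let ω be a non-quasianalytic weight function with constant K ≥ 1 in condition (α), let n ∈ ℕ₀, let k ∈ ℕ and 1 ≤ p < ∞ with kp > N. Then there exist n' ∈ ℕ₀ with n' ≥ n and a constant C > 0 (depending on n, N, k, p) such that for every f ∈ W^{k,p}(ℝ^N, e^{−nω(|x|)}dx): ‖f · e^{−n'ω}‖_∞ ≤ C · Σ_{|α| ≤ k} ‖e^{−nω} ∂^α f‖_p (a weighted Sobolev/Morrey embedding). -/

import Mathlib

open MeasureTheory Real ENNReal Filter

noncomputable section

abbrev Euc (N : ℕ) := EuclideanSpace ℝ (Fin N)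

/-- First-order partial derivative in direction `i`. -/
def pd {N : ℕ} (i : Fin N) (f : Euc N → ℂ) : Euc N → ℂ :=
  fun x => fderiv ℝ f x (EuclideanSpace.single i (1:ℝ))

def pdPow {N : ℕ} (i : Fin N) : ℕ → (Euc N → ℂ) → (Euc N → ℂ)
  | 0, f => f
  | n+1, f => pd i (pdPow i n f)

/-- Multi-index partial derivative `∂^α f`. -/
def mderiv {N : ℕ} (α : Fin N → ℕ) (f : Euc N → ℂ) : Euc N → ℂ :=
  (List.finRange N).foldr (fun i g => pdPow i (α i) g) f

/-- Length `|α|` of a multi-index. -/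
def msize {N : ℕ} (α : Fin N → ℕ) : ℕ := ∑ i, α i

/-- Weighted `L^p` norm `‖e^{w} g‖_p` (value in `ℝ≥0∞`). -/
def wLp {N : ℕ} (p : ℝ≥0∞) (w : Euc N → ℝ) (g : Euc N → ℂ) : ℝ≥0∞ :=
  eLpNorm (fun x => Real.exp (w x) * ‖g x‖) p volume

def youngConj (φ : ℝ → ℝ) (s : ℝ) : ℝ :=
  sSup {y | ∃ t ≥ 0, y = s * t - φ t}

/-- Young conjugate `φ*` of `φ_ω = ω ∘ exp`. -/
def phiStar (ω : ℝ → ℝ) (s : ℝ) : ℝ :=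
  youngConj (fun t => ω (Real.exp t)) s

/-- A non-quasianalytic weight function in the sense of Braun–Meise–Taylor. -/
structure IsWeightFun (ω : ℝ → ℝ) : Prop where
  continuous : ContinuousOn ω (Set.Ici 0)
  mono : MonotoneOn ω (Set.Ici 0)
  nonneg : ∀ t, 0 ≤ t → 0 ≤ ω t
  alpha : ∃ K ≥ 1, ∀ t ≥ 0, ω (2*t) ≤ K * (1 + ω t)
  beta : IntegrableOn (fun t => ω t / (1 + t^2)) (Set.Ici 1)
  gamma : ∃ a b : ℝ, 0 < b ∧ ∀ t ≥ 0, a + b * Real.log (1+t) ≤ ω t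
  delta : ConvexOn ℝ (Set.Ici 0) (fun t => ω (Real.exp t))
  vanish : ∀ t ∈ Set.Icc (0:ℝ) 1, ω t = 0

/-- `g` is the weak (distributional) derivative `∂^α f`. -/
def IsWeakDeriv {N : ℕ} (α : Fin N → ℕ) (f g : Euc N → ℂ) : Prop :=
  ∀ φ : Euc N → ℂ, ContDiff ℝ (⊤ : ℕ∞) φ → HasCompactSupport φ →
    ∫ x, f x * mderiv α φ x = (-1 : ℂ) ^ (msize α) * ∫ x, g x * φ x

/-! ### Part 1: classical partial derivatives of smooth functions -/

lemma pd_smooth {N : ℕ} (i : Fin N) {f : Euc N → ℂ} (hf : ContDiff ℝ (⊤ : ℕ∞) f) :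
    ContDiff ℝ (⊤ : ℕ∞) (pd i f) := by
  unfold pd
  exact (hf.fderiv_right (m := (⊤ : ℕ∞)) (by simp)).clm_apply contDiff_const

lemma pd_supp {N : ℕ} (i : Fin N) {f : Euc N → ℂ} (hf : HasCompactSupport f) :
    HasCompactSupport (pd i f) := by
  unfold pd
  exact hf.fderiv_apply (𝕜 := ℝ) _

lemma pd_add {N : ℕ} (i : Fin N) {f g : Euc N → ℂ} (hf : ContDiff ℝ (⊤ : ℕ∞) f)
    (hg : ContDiff ℝ (⊤ : ℕ∞) g) : pd i (f + g) = pd i f + pd i g := by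
  funext x
  have h1 : DifferentiableAt ℝ f x := (hf.differentiable (by simp)).differentiableAt
  have h2 : DifferentiableAt ℝ g x := (hg.differentiable (by simp)).differentiableAt
  simp [pd, fderiv_add h1 h2]

lemma pd_comm {N : ℕ} (i j : Fin N) {f : Euc N → ℂ} (hf : ContDiff ℝ (⊤ : ℕ∞) f) :
    pd i (pd j f) = pd j (pd i f) := by
  funext x
  have hs : IsSymmSndFDerivAt ℝ f x :=
    (hf.contDiffAt (x := x)).isSymmSndFDerivAt
      (by simpa using WithTop.coe_le_coe.2 (le_top (a := (2 : ℕ∞))))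
  have hd : DifferentiableAt ℝ (fderiv ℝ f) x :=
    ((hf.fderiv_right (m := (⊤ : ℕ∞)) (by simp)).differentiable (by simp)).differentiableAt
  have key : ∀ a b : Fin N, pd a (pd b f) x =
      fderiv ℝ (fderiv ℝ f) x (EuclideanSpace.single a 1) (EuclideanSpace.single b 1) := by
    intro a b
    unfold pd
    rw [fderiv_clm_apply hd (differentiableAt_const _)]
    simp
  rw [key, key]
  exact hs _ _

/-- Reflection-translation. -/
def reflT {N : ℕ} (z : Euc N) (f : Euc N → ℂ) : Euc N → ℂ := fun w => f (z - w)

lemma pd_refl {N : ℕ} (i : Fin N) (z : Euc N) {f : Euc N → ℂ}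
    (hf : ContDiff ℝ (⊤ : ℕ∞) f) (c : ℂ) :
    pd i (c • reflT z f) = (-c) • reflT z (pd i f) := by
  funext w
  have h1 : HasFDerivAt f (fderiv ℝ f (z - w)) (z - w) :=
    (hf.differentiable (by simp)).differentiableAt.hasFDerivAt
  have h2 : HasFDerivAt (fun w : Euc N => z - w) (-(ContinuousLinearMap.id ℝ (Euc N))) w := by
    simpa using (hasFDerivAt_id w).const_sub z
  have h3 := (h1.comp w h2).const_smul c
  have h4 : fderiv ℝ (c • reflT z f) w = _ := h3.fderiv
  simp [pd, h4, reflT]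

lemma pdPow_smooth {N : ℕ} (i : Fin N) (n : ℕ) {f : Euc N → ℂ}
    (hf : ContDiff ℝ (⊤ : ℕ∞) f) : ContDiff ℝ (⊤ : ℕ∞) (pdPow i n f) := by
  induction n with
  | zero => exact hf
  | succ n ih => exact pd_smooth i ih

lemma pdPow_supp {N : ℕ} (i : Fin N) (n : ℕ) {f : Euc N → ℂ}
    (hf : HasCompactSupport f) : HasCompactSupport (pdPow i n f) := by
  induction n with
  | zero => exact hf
  | succ n ih => exact pd_supp i ih

lemma pdPow_add {N : ℕ} (i : Fin N) (n : ℕ) {f g : Euc N → ℂ} (hf : ContDiff ℝ (⊤ : ℕ∞) f)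
    (hg : ContDiff ℝ (⊤ : ℕ∞) g) : pdPow i n (f + g) = pdPow i n f + pdPow i n g := by
  induction n with
  | zero => rfl
  | succ n ih =>
    simp only [pdPow]
    rw [ih, pd_add i (pdPow_smooth i n hf) (pdPow_smooth i n hg)]

lemma pd_pdPow_comm {N : ℕ} (i j : Fin N) (n : ℕ) {f : Euc N → ℂ}
    (hf : ContDiff ℝ (⊤ : ℕ∞) f) : pd i (pdPow j n f) = pdPow j n (pd i f) := by
  induction n with
  | zero => rfl
  | succ n ih =>
    simp only [pdPow]
    rw [pd_comm i j (pdPow_smooth j n hf), ih]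

lemma pdPow_refl {N : ℕ} (i : Fin N) (z : Euc N) (n : ℕ) {f : Euc N → ℂ}
    (hf : ContDiff ℝ (⊤ : ℕ∞) f) (c : ℂ) :
    pdPow i n (c • reflT z f) = ((-1) ^ n * c) • reflT z (pdPow i n f) := by
  induction n with
  | zero => simp [pdPow]
  | succ n ih =>
    simp only [pdPow]
    rw [ih, pd_refl i z (pdPow_smooth i n hf)]
    congr 1
    ring

/-- `mderiv` along a list of indices. -/
def mdl {N : ℕ} (l : List (Fin N)) (α : Fin N → ℕ) (f : Euc N → ℂ) : Euc N → ℂ :=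
  l.foldr (fun i g => pdPow i (α i) g) f

lemma mdl_smooth {N : ℕ} (l : List (Fin N)) (α : Fin N → ℕ) {f : Euc N → ℂ}
    (hf : ContDiff ℝ (⊤ : ℕ∞) f) : ContDiff ℝ (⊤ : ℕ∞) (mdl l α f) := by
  induction l with
  | nil => exact hf
  | cons i l ih => exact pdPow_smooth i _ ih

lemma mdl_supp {N : ℕ} (l : List (Fin N)) (α : Fin N → ℕ) {f : Euc N → ℂ}
    (hf : HasCompactSupport f) : HasCompactSupport (mdl l α f) := by
  induction l with
  | nil => exact hf
  | cons i l ih => exact pdPow_supp i _ ih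

lemma mdl_add {N : ℕ} (l : List (Fin N)) (α : Fin N → ℕ) {f g : Euc N → ℂ}
    (hf : ContDiff ℝ (⊤ : ℕ∞) f) (hg : ContDiff ℝ (⊤ : ℕ∞) g) :
    mdl l α (f + g) = mdl l α f + mdl l α g := by
  induction l with
  | nil => rfl
  | cons i l ih =>
    change pdPow i (α i) (mdl l α (f + g)) = pdPow i (α i) (mdl l α f) + pdPow i (α i) (mdl l α g)
    rw [ih, pdPow_add i _ (mdl_smooth l α hf) (mdl_smooth l α hg)]

lemma mdl_refl {N : ℕ} (l : List (Fin N)) (z : Euc N) (α : Fin N → ℕ) {f : Euc N → ℂ}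
    (hf : ContDiff ℝ (⊤ : ℕ∞) f) :
    mdl l α (reflT z f) = ((-1 : ℂ) ^ (l.map α).sum) • reflT z (mdl l α f) := by
  induction l with
  | nil => simp [mdl]
  | cons i l ih =>
    change pdPow i (α i) (mdl l α (reflT z f)) = _ • reflT z (pdPow i (α i) (mdl l α f))
    rw [ih, pdPow_refl i z _ (mdl_smooth l α hf), List.map_cons, List.sum_cons, pow_add]

lemma mdl_congr {N : ℕ} (l : List (Fin N)) (α β : Fin N → ℕ) (f : Euc N → ℂ)
    (h : ∀ i ∈ l, α i = β i) : mdl l α f = mdl l β f := by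
  induction l with
  | nil => rfl
  | cons i l ih =>
    change pdPow i (α i) (mdl l α f) = pdPow i (β i) (mdl l β f)
    rw [ih (fun j hj => h j (List.mem_cons_of_mem _ hj)), h i (by simp)]

lemma pd_mdl {N : ℕ} (i : Fin N) (l : List (Fin N)) (hl : l.Nodup) (hi : i ∈ l)
    (α : Fin N → ℕ) {f : Euc N → ℂ} (hf : ContDiff ℝ (⊤ : ℕ∞) f) :
    pd i (mdl l α f) = mdl l (α + Pi.single i 1) f := by
  induction l with
  | nil => simp at hi
  | cons j l ih =>
    change pd i (pdPow j (α j) (mdl l α f)) =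
      pdPow j ((α + Pi.single i 1 : Fin N → ℕ) j) (mdl l (α + Pi.single i 1) f)
    rw [List.nodup_cons] at hl
    by_cases hij : i = j
    · subst hij
      rw [mdl_congr l (α + Pi.single i 1) α f]
      · simp [pdPow]
      · intro j hj
        have : j ≠ i := by rintro rfl; exact hl.1 hj
        simp [this]
    · have : i ∈ l := by simpa [hij] using hi
      rw [pd_pdPow_comm i j _ (mdl_smooth l α hf), ih hl.2 this]
      have h2 : (α + Pi.single i 1 : Fin N → ℕ) j = α j := by simp [Ne.symm hij]
      rw [h2]

lemma mderiv_smooth {N : ℕ} (α : Fin N → ℕ) {f : Euc N → ℂ}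
    (hf : ContDiff ℝ (⊤ : ℕ∞) f) : ContDiff ℝ (⊤ : ℕ∞) (mderiv α f) := mdl_smooth _ α hf

lemma mderiv_supp {N : ℕ} (α : Fin N → ℕ) {f : Euc N → ℂ}
    (hf : HasCompactSupport f) : HasCompactSupport (mderiv α f) := mdl_supp _ α hf

lemma mderiv_add {N : ℕ} (α : Fin N → ℕ) {f g : Euc N → ℂ}
    (hf : ContDiff ℝ (⊤ : ℕ∞) f) (hg : ContDiff ℝ (⊤ : ℕ∞) g) :
    mderiv α (f + g) = mderiv α f + mderiv α g := mdl_add _ α hf hg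

lemma mderiv_refl {N : ℕ} (z : Euc N) (α : Fin N → ℕ) {f : Euc N → ℂ}
    (hf : ContDiff ℝ (⊤ : ℕ∞) f) :
    mderiv α (reflT z f) = ((-1 : ℂ) ^ msize α) • reflT z (mderiv α f) := by
  have := mdl_refl (List.finRange N) z α hf
  rw [← List.ofFn_eq_map, List.sum_ofFn] at this
  exact this

lemma pd_mderiv {N : ℕ} (i : Fin N) (α : Fin N → ℕ) {f : Euc N → ℂ}
    (hf : ContDiff ℝ (⊤ : ℕ∞) f) : pd i (mderiv α f) = mderiv (α + Pi.single i 1) f :=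
  pd_mdl i _ (List.nodup_finRange N) (List.mem_finRange i) α hf

lemma mderiv_zero {N : ℕ} (f : Euc N → ℂ) : mderiv (fun _ => 0) f = f := by
  unfold mderiv
  induction List.finRange N with
  | nil => rfl
  | cons i l ih => simp [pdPow]

/-! ### Part 2: replacing a weak derivative by a measurable, locally integrable one -/

lemma int_smooth {N : ℕ} {f ψ : Euc N → ℂ} (hf : LocallyIntegrable f volume)
    (h1 : Continuous ψ) (h2 : HasCompactSupport ψ) : Integrable (fun x => f x * ψ x) := by
  have := hf.integrable_smul_left_of_hasCompactSupport h1 h2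
  refine this.congr (Eventually.of_forall fun x => ?_)
  simp [mul_comm]

lemma weak_replace {N : ℕ} {f g : Euc N → ℂ} {α : Fin N → ℕ}
    (hf : LocallyIntegrable f volume) (hg : IsWeakDeriv α f g) :
    ∃ gr : Euc N → ℂ, Measurable gr ∧ LocallyIntegrable gr volume ∧ IsWeakDeriv α f gr ∧
      ∀ p w, wLp p w gr ≤ wLp p w g := by
  by_cases H : ∀ φ : Euc N → ℂ, ContDiff ℝ (⊤ : ℕ∞) φ → HasCompactSupport φ →
      Integrable (fun x => g x * φ x)
  · have hli : LocallyIntegrable g volume := by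
      intro x
      let b : ContDiffBump x := ⟨1, 2, one_pos, one_lt_two⟩
      have h1 := H (fun y => ((b y : ℝ) : ℂ))
        (Complex.ofRealCLM.contDiff.comp b.contDiff)
        (b.hasCompactSupport.comp_left (g := fun r : ℝ => (r : ℂ)) (by simp))
      refine ⟨Metric.closedBall x 1, Metric.closedBall_mem_nhds x one_pos, ?_⟩
      refine (h1.integrableOn (s := Metric.closedBall x 1)).congr_fun ?_
        Metric.isClosed_closedBall.measurableSet
      intro y hy
      have : b y = 1 := b.one_of_mem_closedBall hy
      simp [this]
    have hm := hli.aestronglyMeasurable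
    refine ⟨hm.mk g, hm.stronglyMeasurable_mk.measurable, hli.congr hm.ae_eq_mk, ?_, ?_⟩
    · intro φ h1 h2
      rw [hg φ h1 h2]
      congr 1
      apply integral_congr_ae
      filter_upwards [hm.ae_eq_mk] with x hx
      rw [hx]
    · intro p w
      apply le_of_eq
      apply eLpNorm_congr_ae
      filter_upwards [hm.ae_eq_mk] with x hx
      rw [hx]
  · push Not at H
    obtain ⟨φ₀, h01, h02, h03⟩ := H
    refine ⟨fun _ => 0, measurable_const, locallyIntegrable_const 0, ?_, ?_⟩
    · have hz : ∀ φ : Euc N → ℂ, ContDiff ℝ (⊤ : ℕ∞) φ → HasCompactSupport φ →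
          ¬ Integrable (fun x => g x * φ x) → ∫ x, f x * mderiv α φ x = 0 := by
        intro φ h1 h2 h3
        rw [hg φ h1 h2, integral_undef h3, mul_zero]
      intro φ h1 h2
      simp only [zero_mul, integral_zero, mul_zero]
      by_cases h3 : Integrable (fun x => g x * φ x)
      · have h4 : ¬ Integrable (fun x => g x * (φ + φ₀) x) := by
          intro h5
          apply h03
          refine (h5.sub h3).congr (Eventually.of_forall fun x => ?_)
          simp; ring
        have h5 := hz (φ + φ₀) (h1.add h01) (h2.add h02) h4
        rw [mderiv_add α h1 h01] at h5
        have h6 : ∫ x, f x * (mderiv α φ + mderiv α φ₀) x =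
            (∫ x, f x * mderiv α φ x) + ∫ x, f x * mderiv α φ₀ x := by
          rw [← integral_add]
          · simp [mul_add]
          · exact int_smooth hf (mderiv_smooth α h1).continuous (mderiv_supp α h2)
          · exact int_smooth hf (mderiv_smooth α h01).continuous (mderiv_supp α h02)
        rw [h6, hz φ₀ h01 h02 h03, add_zero] at h5
        exact h5
      · exact hz φ h1 h2 h3
    · intro p w
      simp [wLp]

/-! ### Part 3: mollification -/

/-- Mollification of `∂^α f`. -/
def Gm {N : ℕ} (f ψ : Euc N → ℂ) (α : Fin N → ℕ) (z : Euc N) : ℂ :=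
  ∫ w, f w * mderiv α ψ (z - w)

lemma Gm_deriv {N : ℕ} {f ψ : Euc N → ℂ} (hf : LocallyIntegrable f volume)
    (h1 : ContDiff ℝ (⊤ : ℕ∞) ψ) (h2 : HasCompactSupport ψ) (α : Fin N → ℕ) (x y : Euc N)
    (t : ℝ) :
    HasDerivAt (fun t : ℝ => Gm f ψ α (x + t • y))
      (∑ i, (y i : ℂ) * Gm f ψ (α + Pi.single i 1) (x + t • y)) t := by
  have hs := mderiv_smooth α h1
  have hc := mderiv_supp α h2
  have key := hc.hasFDerivAt_convolution_right (𝕜 := ℝ) (μ := volume)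
    (ContinuousLinearMap.mul ℝ ℂ) hf (hs.of_le (by simp)) (x + t • y)
  have hl : HasDerivAt (fun t : ℝ => x + t • y) y t := by
    simpa using ((hasDerivAt_id t).smul_const y).const_add x
  have h3 := key.comp_hasDerivAt t hl
  have h4 := convolution_precompR_apply (μ := volume) (ContinuousLinearMap.mul ℝ ℂ) hf
    (hc.fderiv ℝ) (hs.continuous_fderiv (by simp)) (x + t • y) y
  rw [h4] at h3
  refine HasDerivAt.congr_deriv (f := fun t : ℝ => Gm f ψ α (x + t • y)) h3 ?_
  symm
  unfold Gm convolution
  simp only [ContinuousLinearMap.mul_apply']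
  have hy : y = ∑ i, y i • EuclideanSpace.single i (1:ℝ) := by
    ext j
    simp [Finset.sum_apply, Pi.single_apply]
  have h5 : ∀ w, fderiv ℝ (mderiv α ψ) w y =
      ∑ i, (y i : ℂ) * mderiv (α + Pi.single i 1) ψ w := by
    intro w
    conv_lhs => rw [hy]
    rw [map_sum]
    refine Finset.sum_congr rfl fun i _ => ?_
    rw [map_smul, ← pd_mderiv i α h1]
    simp [pd]
  simp only [h5, Finset.mul_sum]
  rw [integral_finsetSum]
  · refine Finset.sum_congr rfl fun i _ => ?_
    rw [← integral_const_mul]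
    congr 1
    funext w
    ring
  · intro i _
    have : Integrable (fun w => f w * reflT (x + t • y) (mderiv (α + Pi.single i 1) ψ) w) := by
      apply int_smooth hf
      · exact (mderiv_smooth _ h1).continuous.comp (by fun_prop)
      · exact (mderiv_supp _ h2).comp_homeomorph (Homeomorph.subLeft (x + t • y))
    refine (this.const_mul (y i : ℂ)).congr (Eventually.of_forall fun w => ?_)
    simp [reflT]; ring

lemma Gm_eq {N : ℕ} {f g ψ : Euc N → ℂ} {α : Fin N → ℕ} (hg : IsWeakDeriv α f g)
    (h1 : ContDiff ℝ (⊤ : ℕ∞) ψ) (h2 : HasCompactSupport ψ) (z : Euc N) :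
    Gm f ψ α z = ∫ w, ψ w * g (z - w) := by
  have h3 := hg (reflT z ψ) (h1.comp (by fun_prop))
    (h2.comp_homeomorph (Homeomorph.subLeft z))
  rw [mderiv_refl z α h1] at h3
  have h4 : ∫ x, f x * ((-1 : ℂ) ^ msize α • reflT z (mderiv α ψ)) x =
      (-1 : ℂ) ^ msize α * Gm f ψ α z := by
    unfold Gm
    rw [← integral_const_mul]
    congr 1
    funext w
    simp [reflT]; ring
  rw [h4] at h3
  have h5 : (-1 : ℂ) ^ msize α ≠ 0 := by simp
  rw [mul_left_cancel₀ h5 h3]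
  rw [← integral_sub_left_eq_self _ volume z]
  congr 1
  funext w
  simp [reflT, mul_comm]

/-! ### Part 4: Taylor formula in one variable -/

lemma taylor_aux (g : ℕ → ℝ → ℂ) (hg : ∀ j t, HasDerivAt (g j) (g (j + 1) t) t) (m : ℕ) (t : ℝ) :
    HasDerivAt (fun t : ℝ => ∑ j ∈ Finset.range (m + 1), ((-t) ^ j / (j.factorial : ℝ)) • g j t)
      (((-t) ^ m / (m.factorial : ℝ)) • g (m + 1) t) t := by
  induction m with
  | zero => simpa using hg 0 t
  | succ m ih =>
    have h1 : HasDerivAt (fun t : ℝ => (-t) ^ (m + 1) / ((m + 1).factorial : ℝ))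
        (-((-t) ^ m / (m.factorial : ℝ))) t := by
      have h2 := (((hasDerivAt_id t).neg).pow (m + 1)).div_const ((m + 1).factorial : ℝ)
      refine h2.congr_deriv ?_
      have : (m.factorial : ℝ) ≠ 0 := by positivity
      simp [Nat.factorial_succ]
      field_simp
    have h3 := ih.add (h1.smul (hg (m + 1) t))
    have h4 : (fun t : ℝ => ∑ j ∈ Finset.range (m + 1 + 1),
        ((-t) ^ j / (j.factorial : ℝ)) • g j t) =
        (fun t : ℝ => ∑ j ∈ Finset.range (m + 1), ((-t) ^ j / (j.factorial : ℝ)) • g j t) +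
        ((fun t : ℝ => (-t) ^ (m + 1) / ((m + 1).factorial : ℝ)) • g (m + 1)) := by
      funext t
      simp [Finset.sum_range_succ]
    rw [h4]
    refine h3.congr_deriv ?_
    rw [neg_smul]
    abel

lemma enorm_coef_le (t : ℝ) (ht : 0 ≤ t) (j : ℕ) (z : ℂ) :
    ‖((-t) ^ j / (j.factorial : ℝ)) • z‖ₑ ≤ ENNReal.ofReal (t ^ j) * ‖z‖ₑ := by
  rw [enorm_smul]
  gcongr
  rw [← ofReal_norm]
  apply ENNReal.ofReal_le_ofReal
  rw [norm_div, norm_pow, norm_neg, Real.norm_of_nonneg ht, Real.norm_of_nonneg (by positivity)]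
  apply div_le_self (by positivity)
  exact_mod_cast Nat.one_le_iff_ne_zero.2 (Nat.factorial_ne_zero j)

lemma taylor1 (g : ℕ → ℝ → ℂ) (hg : ∀ j t, HasDerivAt (g j) (g (j + 1) t) t) (m : ℕ) :
    ‖g 0 0‖ₑ ≤ ∑ j ∈ Finset.range (m + 1), ‖g j 1‖ₑ +
      ∫⁻ t in Set.Ioc (0:ℝ) 1, ENNReal.ofReal (t ^ m) * ‖g (m + 1) t‖ₑ := by
  have hc : ∀ j, Continuous (g j) := fun j =>
    continuous_iff_continuousAt.2 fun t => (hg j t).continuousAt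
  have h1 := intervalIntegral.integral_eq_sub_of_hasDerivAt (a := 0) (b := 1)
    (fun t _ => taylor_aux g hg m t)
    (Continuous.intervalIntegrable (by have := hc (m + 1); fun_prop) _ _)
  have h0 : ∑ j ∈ Finset.range (m + 1), ((-(0:ℝ)) ^ j / (j.factorial : ℝ)) • g j 0 = g 0 0 := by
    rw [Finset.sum_eq_single 0]
    · simp
    · intro b _ hb
      simp [hb]
    · simp
  rw [h0] at h1
  have h2 : g 0 0 = ∑ j ∈ Finset.range (m + 1), ((-(1:ℝ)) ^ j / (j.factorial : ℝ)) • g j 1 -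
      ∫ t in (0:ℝ)..1, ((-t) ^ m / (m.factorial : ℝ)) • g (m + 1) t := by
    rw [h1]; abel
  rw [h2]
  refine (enorm_sub_le).trans ?_
  gcongr
  · refine (enorm_sum_le _ _).trans ?_
    gcongr with j
    simpa using enorm_coef_le 1 zero_le_one j (g j 1)
  · rw [intervalIntegral.integral_of_le zero_le_one]
    refine (enorm_integral_le_lintegral_enorm _).trans ?_
    refine setLIntegral_mono' measurableSet_Ioc fun t ht => ?_
    exact enorm_coef_le t ht.1.le m _

/-! ### Part 5: scaling estimates -/

lemma ball_scale {N : ℕ} {M : Euc N → ℝ≥0∞} (hM : Measurable M) {p : ℝ} (hp : 1 ≤ p)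
    (x : Euc N) {t : ℝ} (ht0 : 0 < t) (ht1 : t ≤ 1) :
    ∫⁻ y in Metric.ball (0 : Euc N) (1/2), M (x + t • y) ≤
      volume (Metric.ball (0 : Euc N) (1/2)) ^ (1 - 1/p) * ENNReal.ofReal (t ^ (-(N:ℝ)/p)) *
        (∫⁻ z in Metric.ball x (1/2), M z ^ p) ^ (1/p) := by
  have hp0 : 0 < p := by linarith
  set A := Metric.ball (0 : Euc N) (1/2) with hA
  have hmeas : Measurable fun y => M (x + t • y) := hM.comp (by fun_prop)
  have h1 := eLpNorm'_le_eLpNorm'_mul_rpow_measure_univ (μ := volume.restrict A)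
    (f := fun y => M (x + t • y)) one_pos hp hmeas.aestronglyMeasurable
  simp only [eLpNorm', enorm_eq_self, ENNReal.rpow_one, div_one, Measure.restrict_apply_univ] at h1
  refine h1.trans ?_
  rw [mul_comm, mul_assoc]
  gcongr
  have h2 : ∫⁻ y in A, M (x + t • y) ^ p ≤
      ENNReal.ofReal (t ^ (-(N:ℝ))) * ∫⁻ z in Metric.ball x (1/2), M z ^ p := by
    let h : Euc N → ℝ≥0∞ := (Metric.ball x (1/2)).indicator (fun z => M z ^ p)
    have hh : Measurable h := (hM.pow_const p).indicator Metric.isOpen_ball.measurableSet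
    calc ∫⁻ y in A, M (x + t • y) ^ p ≤ ∫⁻ y in A, h (x + t • y) := by
          refine setLIntegral_mono' Metric.isOpen_ball.measurableSet fun y hy => ?_
          have : x + t • y ∈ Metric.ball x (1/2) := by
            simp only [hA, Metric.mem_ball, dist_zero_right] at hy
            simp only [Metric.mem_ball, dist_self_add_left, norm_smul, Real.norm_of_nonneg ht0.le]
            nlinarith [norm_nonneg y]
          simp only [h, Set.indicator_of_mem this]
          exact le_rfl
      _ ≤ ∫⁻ y, h (x + t • y) := setLIntegral_le_lintegral _ _
      _ = ∫⁻ u, h (x + u) ∂(Measure.map (t • ·) (volume : Measure (Euc N))) := by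
          rw [lintegral_map (by fun_prop) (by fun_prop)]
      _ = ENNReal.ofReal (t ^ (-(N:ℝ))) * ∫⁻ u, h (x + u) := by
          rw [Measure.map_addHaar_smul _ ht0.ne', lintegral_smul_measure, smul_eq_mul]
          congr 2
          rw [finrank_euclideanSpace_fin, abs_of_pos (by positivity), Real.rpow_neg ht0.le,
            Real.rpow_natCast]
      _ = _ := by
          rw [lintegral_add_left_eq_self h x, lintegral_indicator Metric.isOpen_ball.measurableSet]
  calc (∫⁻ y in A, M (x + t • y) ^ p) ^ (1/p)
      ≤ (ENNReal.ofReal (t ^ (-(N:ℝ))) * ∫⁻ z in Metric.ball x (1/2), M z ^ p) ^ (1/p) := by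
        gcongr
    _ = _ := by
        rw [ENNReal.mul_rpow_of_nonneg _ _ (by positivity),
          ENNReal.ofReal_rpow_of_nonneg (by positivity) (by positivity), ← Real.rpow_mul ht0.le]
        congr 3
        ring_nf

/-- nonnegative mollification -/
def mol {N : ℕ} (ρ M : Euc N → ℝ≥0∞) (z : Euc N) : ℝ≥0∞ := ∫⁻ w, ρ w * M (z - w)

lemma mol_meas {N : ℕ} {ρ M : Euc N → ℝ≥0∞} (hρ : Measurable ρ) (hM : Measurable M) :
    Measurable (mol ρ M) := by
  unfold mol
  exact Measurable.lintegral_prod_right' (f := fun q : Euc N × Euc N => ρ q.2 * M (q.1 - q.2))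
    (by fun_prop)

lemma mol_scale {N : ℕ} {ρ M : Euc N → ℝ≥0∞} (hρ : Measurable ρ) (hM : Measurable M)
    (hρ1 : ∫⁻ w, ρ w ≤ 1) (hρ2 : ∀ w, ρ w ≠ 0 → ‖w‖ < 1/2) {p : ℝ} (hp : 1 ≤ p)
    (x : Euc N) {t : ℝ} (ht0 : 0 < t) (ht1 : t ≤ 1) :
    ∫⁻ y in Metric.ball (0 : Euc N) (1/2), mol ρ M (x + t • y) ≤
      volume (Metric.ball (0 : Euc N) (1/2)) ^ (1 - 1/p) * ENNReal.ofReal (t ^ (-(N:ℝ)/p)) *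
        (∫⁻ z in Metric.ball x 1, M z ^ p) ^ (1/p) := by
  have hp0 : 0 < p := by linarith
  set R := volume (Metric.ball (0 : Euc N) (1/2)) ^ (1 - 1/p) *
    ENNReal.ofReal (t ^ (-(N:ℝ)/p)) * (∫⁻ z in Metric.ball x 1, M z ^ p) ^ (1/p) with hR
  unfold mol
  rw [lintegral_lintegral_swap]
  swap
  · apply Measurable.aemeasurable
    unfold Function.uncurry
    fun_prop
  calc ∫⁻ w, ∫⁻ y in Metric.ball (0 : Euc N) (1/2), ρ w * M (x + t • y - w)
      ≤ ∫⁻ w, ρ w * R := by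
        refine lintegral_mono fun w => ?_
        by_cases hw : ρ w = 0
        · simp [hw]
        rw [lintegral_const_mul _ (by fun_prop)]
        gcongr
        have h1 := ball_scale hM hp (x - w) ht0 ht1
        have h2 : ∀ y, x - w + t • y = x + t • y - w := fun y => by abel
        simp only [h2] at h1
        refine h1.trans ?_
        rw [hR]
        gcongr
        apply Metric.ball_subset_ball'
        have := hρ2 w hw
        simp only [dist_eq_norm, sub_sub_cancel_left, norm_neg]
        linarith
    _ = (∫⁻ w, ρ w) * R := by rw [lintegral_mul_const _ hρ]
    _ ≤ 1 * R := by gcongr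
    _ = R := one_mul R

lemma main_bound {N : ℕ} {ρ M : Euc N → ℝ≥0∞} (hρ : Measurable ρ) (hM : Measurable M)
    (hρ1 : ∫⁻ w, ρ w ≤ 1) (hρ2 : ∀ w, ρ w ≠ 0 → ‖w‖ < 1/2) {p : ℝ} (hp : 1 ≤ p)
    (x : Euc N) (a B : ℝ≥0∞) (m : ℕ)
    (h : ∀ y ∈ Metric.ball (0 : Euc N) (1/2), a ≤ B * ((m + 1 : ℕ) * mol ρ M (x + y) +
      ∫⁻ t in Set.Ioc (0:ℝ) 1, ENNReal.ofReal (t ^ m) * mol ρ M (x + t • y))) :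
    a * volume (Metric.ball (0 : Euc N) (1/2)) ≤
      B * ((m + 1 : ℕ) + ∫⁻ t in Set.Ioc (0:ℝ) 1, ENNReal.ofReal (t ^ m * t ^ (-(N:ℝ)/p))) *
      volume (Metric.ball (0 : Euc N) (1/2)) ^ (1 - 1/p) *
        (∫⁻ z in Metric.ball x 1, M z ^ p) ^ (1/p) := by
  set L := (∫⁻ z in Metric.ball x 1, M z ^ p) ^ (1/p) with hL
  set A := Metric.ball (0 : Euc N) (1/2) with hA
  set J := ∫⁻ t in Set.Ioc (0:ℝ) 1, ENNReal.ofReal (t ^ m * t ^ (-(N:ℝ)/p)) with hJ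
  have hmm := mol_meas hρ hM
  have hj : Measurable (Function.uncurry fun (y : Euc N) (t : ℝ) =>
      ENNReal.ofReal (t ^ m) * mol ρ M (x + t • y)) := by
    unfold Function.uncurry
    have : Measurable fun q : Euc N × ℝ => mol ρ M (x + q.2 • q.1) := hmm.comp (by fun_prop)
    fun_prop
  have h1 : ∫⁻ y in A, mol ρ M (x + y) ≤ volume A ^ (1 - 1/p) * L := by
    have := mol_scale hρ hM hρ1 hρ2 hp x one_pos le_rfl
    simp only [one_smul, Real.one_rpow, ENNReal.ofReal_one, mul_one] at this
    exact this
  have h2 : ∫⁻ y in A, ∫⁻ t in Set.Ioc (0:ℝ) 1, ENNReal.ofReal (t ^ m) * mol ρ M (x + t • y) ≤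
      J * (volume A ^ (1 - 1/p) * L) := by
    rw [lintegral_lintegral_swap hj.aemeasurable]
    calc _ ≤ ∫⁻ t in Set.Ioc (0:ℝ) 1, ENNReal.ofReal (t ^ m * t ^ (-(N:ℝ)/p)) *
          (volume A ^ (1 - 1/p) * L) := by
          refine setLIntegral_mono' measurableSet_Ioc fun t ht => ?_
          have hc : Measurable fun y => mol ρ M (x + t • y) := hmm.comp (by fun_prop)
          rw [lintegral_const_mul _ hc]
          calc _ ≤ ENNReal.ofReal (t ^ m) * (volume A ^ (1 - 1/p) *
                ENNReal.ofReal (t ^ (-(N:ℝ)/p)) * L) := by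
                gcongr
                exact mol_scale hρ hM hρ1 hρ2 hp x ht.1 ht.2
            _ = _ := by
                rw [ENNReal.ofReal_mul (pow_nonneg ht.1.le m)]
                ring
      _ = _ := by rw [lintegral_mul_const _ (by fun_prop)]
  calc a * volume A = ∫⁻ _ in A, a := by rw [setLIntegral_const]
    _ ≤ ∫⁻ y in A, B * ((m + 1 : ℕ) * mol ρ M (x + y) +
      ∫⁻ t in Set.Ioc (0:ℝ) 1, ENNReal.ofReal (t ^ m) * mol ρ M (x + t • y)) :=
        setLIntegral_mono' Metric.isOpen_ball.measurableSet h
    _ = B * ((m + 1 : ℕ) * (∫⁻ y in A, mol ρ M (x + y)) + ∫⁻ y in A,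
      ∫⁻ t in Set.Ioc (0:ℝ) 1, ENNReal.ofReal (t ^ m) * mol ρ M (x + t • y)) := by
        have ha : Measurable fun y => mol ρ M (x + y) := hmm.comp (by fun_prop)
        have hb : Measurable fun y => ∫⁻ t in Set.Ioc (0:ℝ) 1,
          ENNReal.ofReal (t ^ m) * mol ρ M (x + t • y) := hj.lintegral_prod_right'
        rw [lintegral_const_mul _ (by fun_prop), lintegral_add_left (by fun_prop),
          lintegral_const_mul _ ha]
    _ ≤ B * ((m + 1 : ℕ) * (volume A ^ (1 - 1/p) * L) + J * (volume A ^ (1 - 1/p) * L)) := by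
        gcongr
    _ = _ := by ring

/-! ### Part 6: iterated directional derivatives and the local bound -/

/-- `j`-th directional derivative in direction `y` of `∂^α`. -/
def Tt {N : ℕ} (G : (Fin N → ℕ) → Euc N → ℂ) (y : Euc N) : ℕ → (Fin N → ℕ) → Euc N → ℂ
  | 0, α, z => G α z
  | j + 1, α, z => ∑ i, (y i : ℂ) * Tt G y j (α + Pi.single i 1) z

lemma Tt_deriv {N : ℕ} {G : (Fin N → ℕ) → Euc N → ℂ} (x y : Euc N)
    (hG : ∀ α t, HasDerivAt (fun t : ℝ => G α (x + t • y))
      (∑ i, (y i : ℂ) * G (α + Pi.single i 1) (x + t • y)) t) (j : ℕ) :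
    ∀ α t, HasDerivAt (fun t : ℝ => Tt G y j α (x + t • y)) (Tt G y (j + 1) α (x + t • y)) t := by
  induction j with
  | zero => exact hG
  | succ j ih =>
    intro α t
    have := HasDerivAt.fun_sum (u := Finset.univ) (fun i _ =>
      (ih (α + Pi.single i 1) t).const_mul (y i : ℂ))
    exact this

lemma msize_add_single {N : ℕ} (α : Fin N → ℕ) (i : Fin N) :
    msize (α + Pi.single i 1) = msize α + 1 := by
  simp [msize, Finset.sum_add_distrib]

lemma Tt_bound {N : ℕ} {G : (Fin N → ℕ) → Euc N → ℂ} {y : Euc N} (hy : ∀ i, |y i| ≤ 1) (k : ℕ)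
    (z : Euc N) (b : ℝ≥0∞) (hb : ∀ α, msize α ≤ k → ‖G α z‖ₑ ≤ b) (j : ℕ) :
    ∀ α, msize α + j ≤ k → ‖Tt G y j α z‖ₑ ≤ (N : ℝ≥0∞) ^ j * b := by
  induction j with
  | zero => intro α h; simpa [Tt] using hb α h
  | succ j ih =>
    intro α h
    calc ‖Tt G y (j + 1) α z‖ₑ ≤ ∑ i, ‖(y i : ℂ) * Tt G y j (α + Pi.single i 1) z‖ₑ :=
          enorm_sum_le _ _
      _ ≤ ∑ _i : Fin N, (N : ℝ≥0∞) ^ j * b := by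
          gcongr with i
          rw [enorm_mul]
          calc _ ≤ 1 * ((N : ℝ≥0∞) ^ j * b) := by
                gcongr
                · rw [← ofReal_norm, Complex.norm_real, Real.norm_eq_abs]
                  exact ENNReal.ofReal_le_one.2 (hy i)
                · apply ih
                  rw [msize_add_single]; omega
            _ = _ := one_mul _
      _ = _ := by
          simp [pow_succ]; ring

/-- Multi-indices of length at most `k`. -/
def idx (N k : ℕ) : Finset (Fin N → ℕ) :=
  (Fintype.piFinset fun _ : Fin N => Finset.range (k + 1)).filter fun α => msize α ≤ k

lemma mem_idx {N k : ℕ} {α : Fin N → ℕ} : α ∈ idx N k ↔ msize α ≤ k := by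
  simp only [idx, Finset.mem_filter, Fintype.mem_piFinset, Finset.mem_range, and_iff_right_iff_imp]
  intro h i
  have : α i ≤ msize α := Finset.single_le_sum (f := α) (fun _ _ => Nat.zero_le _) (Finset.mem_univ i)
  omega

lemma J_fin (N m : ℕ) (p : ℝ) (hp : 1 ≤ p) (h : (N : ℝ) < (m + 1 : ℕ) * p) :
    ∫⁻ t in Set.Ioc (0:ℝ) 1, ENNReal.ofReal (t ^ m * t ^ (-(N:ℝ)/p)) ≠ ⊤ := by
  have hp0 : 0 < p := by linarith
  have h1 : -1 < (m : ℝ) + -(N:ℝ)/p := by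
    have : (N : ℝ) / p < m + 1 := by
      rw [div_lt_iff₀ hp0]; exact_mod_cast h
    rw [neg_div]; linarith
  have h2 := (intervalIntegral.intervalIntegrable_rpow' (a := 0) (b := 1) h1).1
  have h3 : IntegrableOn (fun t : ℝ => t ^ m * t ^ (-(N:ℝ)/p)) (Set.Ioc 0 1) := by
    refine h2.congr_fun (fun t ht => ?_) measurableSet_Ioc
    simp only
    rw [Real.rpow_add ht.1, Real.rpow_natCast]
  exact h3.lintegral_lt_top.ne

lemma moll_bound {N : ℕ} (m : ℕ) (p : ℝ) (hp : 1 ≤ p)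
    (f : Euc N → ℂ) (D : (Fin N → ℕ) → Euc N → ℂ) (hf : LocallyIntegrable f volume)
    (hm : ∀ α, Measurable (D α)) (hD : ∀ α, msize α ≤ m + 1 → IsWeakDeriv α f (D α))
    (ψ : Euc N → ℂ) (h1 : ContDiff ℝ (⊤ : ℕ∞) ψ) (h2 : HasCompactSupport ψ)
    (hψ1 : ∫⁻ w, ‖ψ w‖ₑ ≤ 1) (hψ2 : ∀ w, ‖ψ w‖ₑ ≠ 0 → ‖w‖ < 1/2) (x : Euc N) :
    ‖Gm f ψ (fun _ => 0) x‖ₑ * volume (Metric.ball (0 : Euc N) (1/2)) ≤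
      ((N : ℝ≥0∞) + 1) ^ (m + 1) *
      ((m + 1 : ℕ) + ∫⁻ t in Set.Ioc (0:ℝ) 1, ENNReal.ofReal (t ^ m * t ^ (-(N:ℝ)/p))) *
      volume (Metric.ball (0 : Euc N) (1/2)) ^ (1 - 1/p) *
        (∫⁻ z in Metric.ball x 1, (∑ α ∈ idx N (m + 1), ‖D α z‖ₑ) ^ p) ^ (1/p) := by
  set M : Euc N → ℝ≥0∞ := fun z => ∑ α ∈ idx N (m + 1), ‖D α z‖ₑ with hM
  have hMm : Measurable M := Finset.measurable_fun_sum _ fun α _ => (hm α).enorm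
  have hψm : Measurable fun w => ‖ψ w‖ₑ := h1.continuous.measurable.enorm
  have hG : ∀ z, ∀ α, msize α ≤ m + 1 → ‖Gm f ψ α z‖ₑ ≤ mol (fun w => ‖ψ w‖ₑ) M z := by
    intro z α hα
    rw [Gm_eq (hD α hα) h1 h2]
    refine (enorm_integral_le_lintegral_enorm _).trans ?_
    refine lintegral_mono fun w => ?_
    simp only [enorm_mul]
    gcongr
    exact Finset.single_le_sum (f := fun α => ‖D α (z - w)‖ₑ) (fun _ _ => zero_le)
      (mem_idx.2 hα)
  refine main_bound hψm hMm hψ1 hψ2 hp x _ _ m fun y hy => ?_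
  have hy1 : ∀ i, |y i| ≤ 1 := by
    intro i
    have h3 : ‖y‖ < 1/2 := by simpa using hy
    have := EuclideanSpace.norm_eq y
    have h4 := PiLp.norm_apply_le y i
    rw [Real.norm_eq_abs] at h4
    linarith
  have hT : ∀ j ≤ m + 1, ∀ z, ‖Tt (Gm f ψ) y j (fun _ => 0) z‖ₑ ≤
      ((N : ℝ≥0∞) + 1) ^ (m + 1) * mol (fun w => ‖ψ w‖ₑ) M z := by
    intro j hj z
    refine (Tt_bound hy1 (m + 1) z _ (hG z) j _ (by simpa [msize] using hj)).trans ?_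
    gcongr ?_ * _
    calc (N : ℝ≥0∞) ^ j ≤ ((N : ℝ≥0∞) + 1) ^ j := by gcongr; exact le_self_add
      _ ≤ _ := pow_le_pow_right₀ le_add_self hj
  have ht := taylor1 (fun j t => Tt (Gm f ψ) y j (fun _ => 0) (x + t • y))
    (fun j t => Tt_deriv x y (fun α t => Gm_deriv hf h1 h2 α x y t) j _ t) m
  simp only [zero_smul, add_zero, one_smul] at ht
  refine (show ‖Gm f ψ (fun _ => 0) x‖ₑ ≤ _ from ht).trans ?_
  rw [mul_add]
  gcongr
  · calc _ ≤ ∑ _j ∈ Finset.range (m + 1), ((N : ℝ≥0∞) + 1) ^ (m + 1) *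
          mol (fun w => ‖ψ w‖ₑ) M (x + y) := by
          gcongr with j hj
          exact hT j (Finset.mem_range.1 hj).le _
      _ = _ := by
          rw [Finset.sum_const, Finset.card_range, nsmul_eq_mul]; ring
  · have hmm := mol_meas hψm hMm
    have hc : Measurable fun t : ℝ => mol (fun w => ‖ψ w‖ₑ) M (x + t • y) :=
      hmm.comp (by fun_prop)
    rw [← lintegral_const_mul _ (by fun_prop)]
    refine lintegral_mono fun t => ?_
    calc _ ≤ ENNReal.ofReal (t ^ m) * (((N : ℝ≥0∞) + 1) ^ (m + 1) *
          mol (fun w => ‖ψ w‖ₑ) M (x + t • y)) := by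
          gcongr
          exact hT (m + 1) le_rfl _
      _ = _ := by ring

lemma local_bound {N : ℕ} (k : ℕ) (hk : 0 < k) (p : ℝ) (hp : 1 ≤ p) (hkp : (N : ℝ) < k * p) :
    ∃ Q : ℝ≥0∞, Q ≠ ⊤ ∧ ∀ (f : Euc N → ℂ) (D : (Fin N → ℕ) → Euc N → ℂ),
      LocallyIntegrable f volume → (∀ α, Measurable (D α)) →
      (∀ α, msize α ≤ k → IsWeakDeriv α f (D α)) →
      ∀ᵐ x, ‖f x‖ₑ ≤
        Q * (∫⁻ z in Metric.ball x 1, (∑ α ∈ idx N k, ‖D α z‖ₑ) ^ p) ^ (1/p) := by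
  obtain ⟨m, rfl⟩ : ∃ m, k = m + 1 := ⟨k - 1, by omega⟩
  have hp0 : 0 < p := by linarith
  set V := volume (Metric.ball (0 : Euc N) (1/2)) with hV
  have hV0 : V ≠ 0 := (Metric.measure_ball_pos _ _ (by norm_num)).ne'
  have hVt : V ≠ ⊤ := measure_ball_lt_top.ne
  set R : ℝ≥0∞ := ((N : ℝ≥0∞) + 1) ^ (m + 1) *
      ((m + 1 : ℕ) + ∫⁻ t in Set.Ioc (0:ℝ) 1, ENNReal.ofReal (t ^ m * t ^ (-(N:ℝ)/p))) *
      V ^ (1 - 1/p) with hR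
  have hRt : R ≠ ⊤ := by
    refine ENNReal.mul_ne_top (ENNReal.mul_ne_top (by finiteness) ?_) ?_
    · exact ENNReal.add_ne_top.2 ⟨by finiteness, J_fin N m p hp hkp⟩
    · refine ENNReal.rpow_ne_top_of_nonneg ?_ hVt
      rw [sub_nonneg, div_le_one hp0]; exact hp
  refine ⟨R / V, ENNReal.div_ne_top hRt hV0, fun f D hf hm hD => ?_⟩
  let φ : ℕ → ContDiffBump (0 : Euc N) := fun i =>
    ⟨1 / (4 * ((i : ℝ) + 1)), 2 * (1 / (4 * ((i : ℝ) + 1))), by positivity,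
      by linarith [show 0 < 1 / (4 * ((i : ℝ) + 1)) by positivity]⟩
  have hφ0 : Tendsto (fun i => (φ i).rOut) atTop (nhds 0) := by
    have := (tendsto_one_div_add_atTop_nhds_zero_nat (𝕜 := ℝ)).const_mul (1/2)
    rw [mul_zero] at this
    refine this.congr fun i => ?_
    simp only [φ]
    have : (i : ℝ) + 1 ≠ 0 := by positivity
    field_simp
    norm_num
  have hφ1 : ∀ i, (φ i).rOut ≤ 1/2 := by
    intro i
    simp only [φ]
    have h3 : (0 : ℝ) ≤ i := Nat.cast_nonneg i
    have : 1 / (4 * ((i : ℝ) + 1)) ≤ 1 / 4 := by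
      apply one_div_le_one_div_of_le <;> linarith
    linarith
  have hae := ContDiffBump.ae_convolution_tendsto_right_of_locallyIntegrable
    (φ := φ) (l := atTop) (K := 2) (μ := volume) hφ0 (Eventually.of_forall fun i => le_rfl) hf
  filter_upwards [hae] with x hx
  have hxe := hx.enorm
  refine le_of_tendsto hxe (Eventually.of_forall fun i => ?_)
  set ψ : Euc N → ℂ := fun w => (((φ i).normed volume w : ℝ) : ℂ) with hψ
  have hs : ContDiff ℝ (⊤ : ℕ∞) ψ := Complex.ofRealCLM.contDiff.comp (φ i).contDiff_normed
  have hc : HasCompactSupport ψ :=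
    ((φ i).hasCompactSupport_normed (μ := volume)).comp_left (g := fun r : ℝ => (r : ℂ)) (by simp)
  have he : ∀ w, ‖ψ w‖ₑ = ENNReal.ofReal ((φ i).normed volume w) := by
    intro w
    rw [hψ, ← ofReal_norm, Complex.norm_real, Real.norm_of_nonneg ((φ i).nonneg_normed w)]
  have hψ1 : ∫⁻ w, ‖ψ w‖ₑ ≤ 1 := by
    simp only [he]
    rw [← ofReal_integral_eq_lintegral_ofReal (φ i).integrable_normed
      (Eventually.of_forall fun w => (φ i).nonneg_normed w), (φ i).integral_normed]
    simp
  have hψ2 : ∀ w, ‖ψ w‖ₑ ≠ 0 → ‖w‖ < 1/2 := by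
    intro w hw
    have h3 : w ∈ Function.support ((φ i).normed volume) := by
      intro h4
      apply hw
      rw [he, h4, ENNReal.ofReal_zero]
    rw [(φ i).support_normed_eq] at h3
    have h4 : ‖w‖ < (φ i).rOut := by simpa using h3
    exact h4.trans_le (hφ1 i)
  have hb := moll_bound m p hp f D hf hm hD ψ hs hc hψ1 hψ2 x
  have hconv : (convolution ((φ i).normed volume) f (ContinuousLinearMap.lsmul ℝ ℝ) volume) x =
      Gm f ψ (fun _ => 0) x := by
    rw [convolution_eq_swap]
    unfold Gm
    rw [mderiv_zero]
    congr 1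
    funext w
    simp [hψ, mul_comm]
  rw [hconv]
  rw [div_eq_mul_inv, mul_right_comm, ← div_eq_mul_inv]
  rw [ENNReal.le_div_iff_mul_le (Or.inl hV0) (Or.inl hVt)]
  refine hb.trans (le_of_eq ?_)
  rw [hR]

/-! ### Part 7: inserting the weight -/

lemma weight_step {N : ℕ} (ω : ℝ → ℝ) (hωc : Continuous fun z : Euc N => ω ‖z‖)
    (n n' : ℕ) (K p : ℝ) (hp : 1 ≤ p) (k : ℕ) (D : (Fin N → ℕ) → Euc N → ℂ)
    (hm : ∀ α, Measurable (D α)) (x : Euc N)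
    (h : ∀ z ∈ Metric.ball x 1, (n : ℝ) * ω ‖z‖ ≤ n * K + n' * ω ‖x‖) :
    ENNReal.ofReal (Real.exp (-((n' : ℝ) * ω ‖x‖))) *
      (∫⁻ z in Metric.ball x 1, (∑ α ∈ idx N k, ‖D α z‖ₑ) ^ p) ^ (1/p) ≤
    ENNReal.ofReal (Real.exp (n * K)) *
      ∑ α ∈ idx N k, wLp (ENNReal.ofReal p) (fun x => -((n : ℝ) * ω ‖x‖)) (D α) := by
  have hp0 : 0 < p := by linarith
  set M : Euc N → ℝ≥0∞ := fun z => ∑ α ∈ idx N k, ‖D α z‖ₑ with hM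
  have hMm : Measurable M := Finset.measurable_fun_sum _ fun α _ => (hm α).enorm
  set W : Euc N → ℝ≥0∞ := fun z => ENNReal.ofReal (Real.exp (-((n : ℝ) * ω ‖z‖))) with hW
  have hWm : Measurable W := by
    exact (Real.measurable_exp.comp ((hωc.measurable.const_mul (n : ℝ)).neg)).ennreal_ofReal
  set c1 := ENNReal.ofReal (Real.exp (-((n' : ℝ) * ω ‖x‖))) with hc1
  set c2 := ENNReal.ofReal (Real.exp (n * K)) with hc2
  have pull : ∀ (c : ℝ≥0∞) (F : Euc N → ℝ≥0∞) (μ : Measure (Euc N)), Measurable F →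
      c * (∫⁻ z, F z ^ p ∂μ) ^ (1/p) = (∫⁻ z, (c * F z) ^ p ∂μ) ^ (1/p) := by
    intro c F μ hF
    simp only [ENNReal.mul_rpow_of_nonneg _ _ hp0.le]
    rw [lintegral_const_mul _ (by fun_prop), ENNReal.mul_rpow_of_nonneg _ _ (by positivity),
      ← ENNReal.rpow_mul, mul_one_div_cancel hp0.ne', ENNReal.rpow_one]
  have hle : ∀ z ∈ Metric.ball x 1, c1 ≤ c2 * W z := by
    intro z hz
    rw [hc1, hc2, hW, ← ENNReal.ofReal_mul (Real.exp_nonneg _), ← Real.exp_add]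
    apply ENNReal.ofReal_le_ofReal
    apply Real.exp_le_exp.2
    linarith [h z hz]
  rw [pull c1 M _ hMm]
  calc (∫⁻ z in Metric.ball x 1, (c1 * M z) ^ p) ^ (1/p)
      ≤ (∫⁻ z in Metric.ball x 1, (c2 * (W z * M z)) ^ p) ^ (1/p) := by
        refine ENNReal.rpow_le_rpow ?_ (by positivity)
        refine setLIntegral_mono' Metric.isOpen_ball.measurableSet fun z hz => ?_
        refine ENNReal.rpow_le_rpow ?_ hp0.le
        rw [← mul_assoc]
        gcongr
        exact hle z hz
    _ ≤ (∫⁻ z, (c2 * (W z * M z)) ^ p) ^ (1/p) := by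
        refine ENNReal.rpow_le_rpow ?_ (by positivity)
        exact setLIntegral_le_lintegral _ _
    _ = c2 * (∫⁻ z, (W z * M z) ^ p) ^ (1/p) := by
        rw [pull c2 (fun z => W z * M z) _ (hWm.mul hMm)]
    _ = c2 * eLpNorm' (∑ α ∈ idx N k, fun z => W z * ‖D α z‖ₑ) p volume := by
        simp only [eLpNorm', enorm_eq_self, Finset.sum_apply, hM, Finset.mul_sum]
    _ ≤ c2 * ∑ α ∈ idx N k, eLpNorm' (fun z => W z * ‖D α z‖ₑ) p volume := by
        gcongr
        refine eLpNorm'_sum_le (fun α _ => ?_) hp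
        exact (hWm.mul (hm α).enorm).aestronglyMeasurable
    _ = _ := by
        congr 1
        refine Finset.sum_congr rfl fun α _ => ?_
        unfold wLp
        rw [eLpNorm_eq_eLpNorm' (by simpa using hp0) ofReal_ne_top, ENNReal.toReal_ofReal hp0.le]
        simp only [eLpNorm', enorm_eq_self, hW]
        congr 2
        funext z
        rw [enorm_mul, enorm_norm, Real.enorm_of_nonneg (Real.exp_nonneg _)]

/-- Weighted Sobolev/Morrey embedding: if `kp > N` then, for some `n' ≥ n` and `C > 0`
depending only on `n, N, k, p`, every `f ∈ W^{k,p}(ℝ^N, e^{-nω(|x|)}dx)` satisfies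
`‖f e^{-n'ω}‖_∞ ≤ C ‖f‖_{k,p,e^{-nω}}`. -/
theorem weighted_morrey
    {N : ℕ} (ω : ℝ → ℝ) (hω : IsWeightFun ω)
    (n k : ℕ) (hk : 0 < k) (p : ℝ) (hp : 1 ≤ p) (hkp : (N : ℝ) < k * p) :
    ∃ n' : ℕ, n ≤ n' ∧ ∃ C > 0,
      ∀ (f : Euc N → ℂ) (D : (Fin N → ℕ) → Euc N → ℂ),
        LocallyIntegrable f volume →
        D (fun _ => 0) = f →
        (∀ α : Fin N → ℕ, msize α ≤ k → IsWeakDeriv α f (D α)) →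
        eLpNorm (fun x => Real.exp (-((n' : ℝ) * ω ‖x‖)) * ‖f x‖) ⊤ volume ≤
          ENNReal.ofReal C *
            ∑' α : Fin N → ℕ,
              (if msize α ≤ k then
                wLp (ENNReal.ofReal p) (fun x => -((n : ℝ) * ω ‖x‖)) (D α) else 0) := by
  have hp0 : 0 < p := by linarith
  obtain ⟨K, hK1, hK⟩ := hω.alpha
  have hK0 : 0 ≤ K := by linarith
  have hωc : Continuous fun z : Euc N => ω ‖z‖ :=
    hω.continuous.comp_continuous continuous_norm fun z => norm_nonneg z
  obtain ⟨Q, hQ, hloc⟩ := local_bound (N := N) k hk p hp hkp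
  have hnn : (n : ℝ) * K ≤ (⌈(n : ℝ) * K⌉₊ : ℕ) := Nat.le_ceil _
  refine ⟨⌈(n : ℝ) * K⌉₊, ?_, (Q * ENNReal.ofReal (Real.exp (n * K))).toReal + 1,
    by positivity, ?_⟩
  · have : (n : ℝ) ≤ (⌈(n : ℝ) * K⌉₊ : ℕ) := by
      refine le_trans ?_ hnn
      nlinarith [Nat.cast_nonneg (α := ℝ) n]
    exact_mod_cast this
  set n' := ⌈(n : ℝ) * K⌉₊
  intro f D hf _ hD
  have hrep : ∀ α : Fin N → ℕ, ∃ gr : Euc N → ℂ, Measurable gr ∧ (msize α ≤ k →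
      IsWeakDeriv α f gr ∧ ∀ p w, wLp p w gr ≤ wLp p w (D α)) := by
    intro α
    by_cases hα : msize α ≤ k
    · obtain ⟨gr, h1, _, h3, h4⟩ := weak_replace hf (hD α hα)
      exact ⟨gr, h1, fun _ => ⟨h3, h4⟩⟩
    · exact ⟨fun _ => 0, measurable_const, fun h => absurd h hα⟩
  choose Dr hEm hE using hrep
  have hlb := hloc f Dr hf hEm fun α hα => (hE α hα).1
  have hsum : (∑' α : Fin N → ℕ, (if msize α ≤ k then
      wLp (ENNReal.ofReal p) (fun x => -((n : ℝ) * ω ‖x‖)) (D α) else 0)) =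
      ∑ α ∈ idx N k, wLp (ENNReal.ofReal p) (fun x => -((n : ℝ) * ω ‖x‖)) (D α) := by
    rw [tsum_eq_sum (s := idx N k)]
    · refine Finset.sum_congr rfl fun α hα => ?_
      rw [if_pos (mem_idx.1 hα)]
    · intro α hα
      rw [if_neg (fun h => hα (mem_idx.2 h))]
  rw [hsum]
  set Tot := ∑ α ∈ idx N k, wLp (ENNReal.ofReal p) (fun x => -((n : ℝ) * ω ‖x‖)) (D α)
  have hfin : Q * ENNReal.ofReal (Real.exp (n * K)) ≠ ⊤ := ENNReal.mul_ne_top hQ ofReal_ne_top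
  have hC : Q * ENNReal.ofReal (Real.exp (n * K)) ≤
      ENNReal.ofReal ((Q * ENNReal.ofReal (Real.exp (n * K))).toReal + 1) := by
    conv_lhs => rw [← ENNReal.ofReal_toReal hfin]
    exact ENNReal.ofReal_le_ofReal (by linarith)
  refine le_trans ?_ (mul_le_mul_left hC Tot)
  rw [eLpNorm_exponent_top]
  refine essSup_le_of_ae_le _ ?_
  filter_upwards [hlb] with x hx
  have hw := weight_step ω hωc n n' K p hp k Dr hEm x (by
    intro z hz
    have h1 : ω ‖z‖ ≤ K * (1 + ω ‖x‖) := by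
      have hzn : ‖z‖ ≤ ‖x‖ + 1 := by
        have : ‖z - x‖ < 1 := by simpa [dist_eq_norm] using hz
        have h3 := norm_add_le x (z - x)
        rw [add_sub_cancel] at h3
        linarith
      have hm : ω (max ‖x‖ 1) = ω ‖x‖ := by
        rcases le_total ‖x‖ 1 with h | h
        · rw [max_eq_right h, hω.vanish 1 (by simp), hω.vanish ‖x‖ ⟨norm_nonneg x, h⟩]
        · rw [max_eq_left h]
      have h4 := hK (max ‖x‖ 1) (le_max_of_le_right zero_le_one)
      rw [hm] at h4
      refine le_trans (hω.mono (norm_nonneg z) ?_ ?_) h4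
      · have h7 : (0 : ℝ) ≤ max ‖x‖ 1 := le_max_of_le_right zero_le_one
        exact Set.mem_Ici.2 (by linarith)
      · linarith [le_max_left ‖x‖ 1, le_max_right ‖x‖ 1]
    have h2 := hω.nonneg ‖x‖ (norm_nonneg x)
    have h5 : (n : ℝ) * ω ‖z‖ ≤ n * (K * (1 + ω ‖x‖)) :=
      mul_le_mul_of_nonneg_left h1 (Nat.cast_nonneg n)
    have h6 : (n : ℝ) * K * ω ‖x‖ ≤ n' * ω ‖x‖ := mul_le_mul_of_nonneg_right hnn h2
    linarith)
  calc ‖Real.exp (-((n' : ℝ) * ω ‖x‖)) * ‖f x‖‖ₑ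
      = ENNReal.ofReal (Real.exp (-((n' : ℝ) * ω ‖x‖))) * ‖f x‖ₑ := by
        rw [enorm_mul, enorm_norm, Real.enorm_of_nonneg (Real.exp_nonneg _)]
    _ ≤ ENNReal.ofReal (Real.exp (-((n' : ℝ) * ω ‖x‖))) *
        (Q * (∫⁻ z in Metric.ball x 1, (∑ α ∈ idx N k, ‖Dr α z‖ₑ) ^ p) ^ (1/p)) := by gcongr
    _ = Q * (ENNReal.ofReal (Real.exp (-((n' : ℝ) * ω ‖x‖))) *
        (∫⁻ z in Metric.ball x 1, (∑ α ∈ idx N k, ‖Dr α z‖ₑ) ^ p) ^ (1/p)) := by ring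
    _ ≤ Q * (ENNReal.ofReal (Real.exp (n * K)) *
        ∑ α ∈ idx N k, wLp (ENNReal.ofReal p) (fun x => -((n : ℝ) * ω ‖x‖)) (Dr α)) := by gcongr
    _ ≤ Q * (ENNReal.ofReal (Real.exp (n * K)) * Tot) := by
        refine mul_le_mul_right (mul_le_mul_right (Finset.sum_le_sum fun α hα => ?_) _) _
        exact (hE α (mem_idx.1 hα)).2 _ _
    _ = _ := by ring
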